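/- Paths of controlled energy: let u₀ ∈ L^{m+1}(Ω) with Φ(u₀) ∈ A, and let w ∈ A satisfy w > 0 a.e. in Ω and F(w) = Λ₁. Write Φ(u₀)⁺ and Φ(u₀)⁻ for the positive and negative parts of Φ(u₀). Assume that either (a) F(Φ(u₀)⁻) > 0 and F(Φ(u₀)) < Λ₂, or (b) F(Φ(u₀)⁻) ≤ 0 and F(Φ(u₀)⁺) + 2∫_{ℝ^N}∫_{ℝ^N} Φ(u₀)⁺(x)Φ(u₀)⁻(y)/|x−y|^{N+2s} dx dy < Λ₂. Then there exists θ : [0,1] → A, continuous with respect to the distance (u,v) ↦ [u−v]_s, such that θ(0) = w, θ(1) = Φ(u₀), and F(θ(t)) < Λ₂ for every t ∈ [0,1]. -/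

import Mathlib

/-!
Write `v = Φ(u₀)`, `P = v⁺`, `M = v⁻`, so that `v = P - M`. The path runs from `w` to `P` and then
along the segment `P - τ M`, `τ ∈ [0,1]`, to `v`.

On the first piece, `σ_τ = ((1-τ) w^q + τ P^q)^{1/q}`. Minkowski's inequality in a two-point `ℓ^q`
space and convexity of `r ↦ r^{2/q}` give
`(σ_τ(x) - σ_τ(y))² ≤ (1-τ)(w(x) - w(y))² + τ(P(x) - P(y))²` (`qmean_diff_sq_le`), while
`∫ σ_τ^q` is affine in `τ`; hence `F(σ_τ) ≤ (1-τ) F(w) + τ F(P)` (`EF_qmean_le`). Since `w` is a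
minimizer, this is at most `F(P)`. That `Λ₁` is a genuine lower bound of `F` rests on a Poincaré
inequality (`poincare`, `EF_bddBelow`).

On the second piece, the disjointness of the supports of `P` and `M` gives
`F(P - τM) = F(P) + 2τ I(P,M) + τ²A - τ^q B` with `A - B = F(M)` (`EF_sub`). As `τ² ≤ τ^q`, this is
at most `F(v)` when `F(M) > 0`, and at most `F(P) + 2 I(P,M)` when `F(M) ≤ 0`
(`EF_segment_lt`). Taking `τ = 0` also bounds `F(P)`, so the whole path stays below `Λ₂`.

Continuity in the Gagliardo seminorm is dominated convergence (`gluedPath_tendsto`): the path is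
pointwise continuous in `t`, and its increments are bounded by those of `w` and `v`.
-/

open MeasureTheory ENNReal Filter

noncomputable section

/-- Euclidean space `ℝ^N`. -/
abbrev E (N : ℕ) : Type := EuclideanSpace ℝ (Fin N)

/-- The squared Gagliardo seminorm `[u]_s^2`, valued in `[0,∞]`. -/
def gagSq (N : ℕ) (s : ℝ) (u : E N → ℝ) : ℝ≥0∞ :=
  ∫⁻ x : E N, ∫⁻ y : E N,
    ENNReal.ofReal ((u x - u y) ^ 2 / dist x y ^ ((N : ℝ) + 2 * s))

/-- The admissible class `A`: measurable functions vanishing a.e. outside `Ω`,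
with finite Gagliardo seminorm and `|u|^q` integrable on `Ω`. -/
def memA (N : ℕ) (s q : ℝ) (Ω : Set (E N)) (u : E N → ℝ) : Prop :=
  Measurable u ∧ (∀ᵐ x : E N, x ∉ Ω → u x = 0) ∧ gagSq N s u < ⊤ ∧
    IntegrableOn (fun x => |u x| ^ q) Ω

/-- The energy functional `F(u) = (1/2)[u]_s^2 − (α/q)∫_Ω |u|^q`. -/
def EF (N : ℕ) (s q α : ℝ) (Ω : Set (E N)) (u : E N → ℝ) : ℝ :=
  (1 / 2) * (gagSq N s u).toReal - (α / q) * ∫ x in Ω, |u x| ^ q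

/-- The ground state level `Λ₁ = inf {F(u) : u ∈ A}`. -/
def Lam1 (N : ℕ) (s q α : ℝ) (Ω : Set (E N)) : ℝ :=
  sInf {c : ℝ | ∃ u, memA N s q Ω u ∧ EF N s q α Ω u = c}

/-- A critical point of `F`: a weak solution of `(−Δ)^s u = α|u|^{q−2}u` in `Ω`. -/
def IsCritPt (N : ℕ) (s q α : ℝ) (Ω : Set (E N)) (u : E N → ℝ) : Prop :=
  memA N s q Ω u ∧ ∀ ψ : E N → ℝ, memA N s q Ω ψ →
    (∫ x : E N, ∫ y : E N,
        (u x - u y) * (ψ x - ψ y) / dist x y ^ ((N : ℝ) + 2 * s)) =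
      α * ∫ x in Ω, |u x| ^ (q - 2) * u x * ψ x

/-- A critical value of `F`. -/
def IsCritVal (N : ℕ) (s q α : ℝ) (Ω : Set (E N)) (c : ℝ) : Prop :=
  ∃ u, IsCritPt N s q α Ω u ∧ EF N s q α Ω u = c

/-- The first excited level `Λ₂ = inf {Λ > Λ₁ : Λ is a critical value of F}`. -/
def Lam2 (N : ℕ) (s q α : ℝ) (Ω : Set (E N)) : ℝ :=
  sInf {c : ℝ | Lam1 N s q α Ω < c ∧ IsCritVal N s q α Ω c}

/-- The cross term `I(u,v) = ∫∫ u(x)v(y)/|x−y|^{N+2s}` (valued in `[0,∞]`). -/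
def crossI (N : ℕ) (s : ℝ) (u v : E N → ℝ) : ℝ≥0∞ :=
  ∫⁻ x : E N, ∫⁻ y : E N,
    ENNReal.ofReal (u x * v y / dist x y ^ ((N : ℝ) + 2 * s))

/-- The metric of convergence in measure on `Ω`. -/
def d0 (N : ℕ) (Ω : Set (E N)) (u v : E N → ℝ) : ℝ :=
  ∫ x in Ω, min 1 |u x - v x|

/-- The power nonlinearity `Φ(t) = |t|^{m−1} t`. -/
def Phi (m t : ℝ) : ℝ := |t| ^ (m - 1) * t

/-- The nonlinearity `g(t) = |t|^{(m−1)/2} t`. -/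
def gfun (m t : ℝ) : ℝ := |t| ^ ((m - 1) / 2) * t

/-! ### The Gagliardo seminorm as an integral over the product space -/

lemma measurable_quot (N : ℕ) (s : ℝ) (f : E N × E N → ℝ) (hf : Measurable f) :
    Measurable fun p : E N × E N =>
      ENNReal.ofReal (f p / dist p.1 p.2 ^ ((N : ℝ) + 2 * s)) := by
  fun_prop

lemma gagSq_prod (N : ℕ) (s : ℝ) (u : E N → ℝ) (hu : Measurable u) :
    gagSq N s u = ∫⁻ p : E N × E N,
      ENNReal.ofReal ((u p.1 - u p.2) ^ 2 / dist p.1 p.2 ^ ((N : ℝ) + 2 * s)) := by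
  have hm := measurable_quot N s (fun p => (u p.1 - u p.2) ^ 2) (by fun_prop)
  exact (lintegral_prod _ hm.aemeasurable).symm

lemma crossI_prod (N : ℕ) (s : ℝ) (u v : E N → ℝ) (hu : Measurable u) (hv : Measurable v) :
    crossI N s u v = ∫⁻ p : E N × E N,
      ENNReal.ofReal (u p.1 * v p.2 / dist p.1 p.2 ^ ((N : ℝ) + 2 * s)) := by
  have hm := measurable_quot N s (fun p => u p.1 * v p.2) (by fun_prop)
  exact (lintegral_prod _ hm.aemeasurable).symm

lemma crossI_prod_swap (N : ℕ) (s : ℝ) (u v : E N → ℝ) (hu : Measurable u)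
    (hv : Measurable v) :
    crossI N s u v = ∫⁻ p : E N × E N,
      ENNReal.ofReal (u p.2 * v p.1 / dist p.1 p.2 ^ ((N : ℝ) + 2 * s)) := by
  have hm := measurable_quot N s (fun p => u p.2 * v p.1) (by fun_prop)
  have h := lintegral_prod_symm _ hm.aemeasurable (μ := volume) (ν := volume)
  rw [← Measure.volume_eq_prod] at h
  rw [h]
  simp only [crossI, dist_comm]

lemma gagSq_congr (N : ℕ) (s : ℝ) (u v : E N → ℝ) (h : u =ᵐ[volume] v) :
    gagSq N s u = gagSq N s v := by
  unfold gagSq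
  refine lintegral_congr_ae ?_
  filter_upwards [h] with x hx
  refine lintegral_congr_ae ?_
  filter_upwards [h] with y hy
  rw [hx, hy]

/-- Domination of quadratic increments pointwise passes to the Gagliardo seminorms. -/
lemma gagSq_le (N : ℕ) (s : ℝ) (u f g h : E N → ℝ) (hf : Measurable f)
    (hg : Measurable g) (hh : Measurable h) (hu : Measurable u) (a b c : ℝ) (ha : 0 ≤ a)
    (hb : 0 ≤ b) (hc : 0 ≤ c)
    (H : ∀ x y, (u x - u y) ^ 2 ≤
      a * (f x - f y) ^ 2 + b * (g x - g y) ^ 2 + c * (h x - h y) ^ 2) :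
    gagSq N s u ≤ ENNReal.ofReal a * gagSq N s f + ENNReal.ofReal b * gagSq N s g +
      ENNReal.ofReal c * gagSq N s h := by
  rw [gagSq_prod N s u hu, gagSq_prod N s f hf, gagSq_prod N s g hg, gagSq_prod N s h hh]
  have hmf := measurable_quot N s (fun p => (f p.1 - f p.2) ^ 2) (by fun_prop)
  have hmg := measurable_quot N s (fun p => (g p.1 - g p.2) ^ 2) (by fun_prop)
  have hmh := measurable_quot N s (fun p => (h p.1 - h p.2) ^ 2) (by fun_prop)
  rw [← lintegral_const_mul _ hmf, ← lintegral_const_mul _ hmg, ← lintegral_const_mul _ hmh,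
    ← lintegral_add_right _ (hmg.const_mul _), ← lintegral_add_right _ (hmh.const_mul _)]
  refine lintegral_mono fun p => ?_
  have hk : 0 ≤ dist p.1 p.2 ^ ((N : ℝ) + 2 * s) := by positivity
  simp only []
  rw [← ENNReal.ofReal_mul ha, ← ENNReal.ofReal_mul hb, ← ENNReal.ofReal_mul hc,
    ← ENNReal.ofReal_add (by positivity) (by positivity),
    ← ENNReal.ofReal_add (by positivity) (by positivity)]
  refine ENNReal.ofReal_le_ofReal ?_
  calc _ ≤ (a * (f p.1 - f p.2) ^ 2 + b * (g p.1 - g p.2) ^ 2 + c * (h p.1 - h p.2) ^ 2) /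
        dist p.1 p.2 ^ ((N : ℝ) + 2 * s) := by
        gcongr
        exact H p.1 p.2
    _ = _ := by ring

/-- Expansion of the seminorm of `P - τ M` when `P, M ≥ 0` have disjoint supports. -/
lemma gagSq_sub (N : ℕ) (s : ℝ) (P M : E N → ℝ) (hP : Measurable P) (hM : Measurable M)
    (hP0 : ∀ x, 0 ≤ P x) (hM0 : ∀ x, 0 ≤ M x) (hPM : ∀ x, P x * M x = 0) (τ : ℝ)
    (hτ : 0 ≤ τ) :
    gagSq N s (fun x => P x - τ * M x) =
      gagSq N s P + ENNReal.ofReal (τ ^ 2) * gagSq N s M +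
        ENNReal.ofReal (4 * τ) * crossI N s P M := by
  have e : ENNReal.ofReal (4 * τ) * crossI N s P M =
      ENNReal.ofReal (2 * τ) * crossI N s P M + ENNReal.ofReal (2 * τ) * crossI N s P M := by
    rw [← add_mul, ← ENNReal.ofReal_add (by positivity) (by positivity)]
    ring_nf
  rw [e]
  nth_rewrite 1 [crossI_prod N s P M hP hM]
  rw [crossI_prod_swap N s P M hP hM]
  rw [gagSq_prod N s _ (by fun_prop), gagSq_prod N s P hP, gagSq_prod N s M hM]
  have h1 := measurable_quot N s (fun p => (P p.1 - P p.2) ^ 2) (by fun_prop)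
  have h2 := measurable_quot N s (fun p => (M p.1 - M p.2) ^ 2) (by fun_prop)
  have h3 := measurable_quot N s (fun p => P p.1 * M p.2) (by fun_prop)
  have h4 := measurable_quot N s (fun p => P p.2 * M p.1) (by fun_prop)
  rw [← lintegral_const_mul _ h2, ← lintegral_const_mul _ h3, ← lintegral_const_mul _ h4,
    ← add_assoc, ← lintegral_add_right _ (h2.const_mul _),
    ← lintegral_add_right _ (h3.const_mul _), ← lintegral_add_right _ (h4.const_mul _)]
  refine lintegral_congr fun p => ?_
  have a1 := hP0 p.1
  have a2 := hP0 p.2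
  have b1 := hM0 p.1
  have b2 := hM0 p.2
  have hk : 0 ≤ dist p.1 p.2 ^ ((N : ℝ) + 2 * s) := by positivity
  rw [← ENNReal.ofReal_mul (by positivity), ← ENNReal.ofReal_mul (by positivity),
    ← ENNReal.ofReal_mul (by positivity),
    ← ENNReal.ofReal_add (by positivity) (by positivity),
    ← ENNReal.ofReal_add (by positivity) (by positivity),
    ← ENNReal.ofReal_add (by positivity) (by positivity)]
  congr 1
  have e : (P p.1 - τ * M p.1 - (P p.2 - τ * M p.2)) ^ 2 =
      (P p.1 - P p.2) ^ 2 + τ ^ 2 * (M p.1 - M p.2) ^ 2 +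
      2 * τ * (P p.1 * M p.2) + 2 * τ * (P p.2 * M p.1) := by
    linear_combination (-2 * τ) * hPM p.1 - 2 * τ * hPM p.2
  rw [e]
  ring

/-! ### Hidden convexity -/

/-- The `q`-power mean path between `|a|` (at `t = 0`) and `|b|` (at `t = 1`). -/
def qmean (q t a b : ℝ) : ℝ := ((1 - t) * |a| ^ q + t * |b| ^ q) ^ (1 / q)

lemma qmean_nonneg (q t a b : ℝ) (ht : t ∈ Set.Icc (0 : ℝ) 1) : 0 ≤ qmean q t a b := by
  have h0 := ht.1
  have h1 : 0 ≤ 1 - t := by linarith [ht.2]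
  unfold qmean
  positivity

lemma qmean_rpow (q t a b : ℝ) (hq : 0 < q) (ht : t ∈ Set.Icc (0 : ℝ) 1) :
    |qmean q t a b| ^ q = (1 - t) * |a| ^ q + t * |b| ^ q := by
  have h0 := ht.1
  have h1 : 0 ≤ 1 - t := by linarith [ht.2]
  rw [abs_of_nonneg (qmean_nonneg q t a b ht)]
  unfold qmean
  rw [← Real.rpow_mul (by positivity), one_div_mul_cancel hq.ne', Real.rpow_one]

lemma qmean_zero (q a b : ℝ) (hq : 0 < q) : qmean q 0 a b = |a| := by
  simp only [qmean, sub_zero, one_mul, zero_mul, add_zero]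
  rw [← Real.rpow_mul (by positivity), mul_one_div_cancel hq.ne', Real.rpow_one]

lemma qmean_one (q a b : ℝ) (hq : 0 < q) : qmean q 1 a b = |b| := by
  simp only [qmean, sub_self, one_mul, zero_mul, zero_add]
  rw [← Real.rpow_mul (by positivity), mul_one_div_cancel hq.ne', Real.rpow_one]

lemma qmean_continuous (q a b : ℝ) (hq : 0 < q) : Continuous fun t => qmean q t a b := by
  unfold qmean
  refine Continuous.rpow_const (by fun_prop) fun t => Or.inr (by positivity)

/-- Minkowski's inequality in the weighted two-point `ℓ^q` space. -/
lemma qmean_sub_le (q t a b c d : ℝ) (hq : 1 ≤ q) (ht : t ∈ Set.Icc (0 : ℝ) 1) :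
    qmean q t a b ≤ qmean q t c d + qmean q t (a - c) (b - d) := by
  have h0 := ht.1
  have h1 : 0 ≤ 1 - t := by linarith [ht.2]
  have hq0 : 0 < q := by linarith
  have key := Real.Lp_add_le Finset.univ
    ![(1 - t) ^ (1 / q) * c, t ^ (1 / q) * d]
    ![(1 - t) ^ (1 / q) * (a - c), t ^ (1 / q) * (b - d)] hq
  have e : ∀ r z : ℝ, 0 ≤ r → |r ^ (1 / q) * z| ^ q = r * |z| ^ q := by
    intro r z hr
    rw [abs_mul, Real.mul_rpow (abs_nonneg _) (abs_nonneg _),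
      abs_of_nonneg (Real.rpow_nonneg hr _), ← Real.rpow_mul hr, one_div_mul_cancel hq0.ne',
      Real.rpow_one]
  simp only [Fin.sum_univ_two, Matrix.cons_val_zero, Matrix.cons_val_one, ← mul_add,
    add_sub_cancel] at key
  simp only [e _ _ h0, e _ _ h1] at key
  exact key

/-- Convexity of `r ↦ r^(2/q)`, which uses `q ≤ 2`. -/
lemma qmean_sq_le (q t a b : ℝ) (hq : 1 ≤ q) (hq2 : q ≤ 2) (ht : t ∈ Set.Icc (0 : ℝ) 1) :
    qmean q t a b ^ 2 ≤ (1 - t) * a ^ 2 + t * b ^ 2 := by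
  have h0 := ht.1
  have h1 : 0 ≤ 1 - t := by linarith [ht.2]
  have hq0 : 0 < q := by linarith
  have hc := convexOn_rpow (p := 2 / q) (by rw [le_div_iff₀ hq0]; linarith)
  have := hc.2 (x := |a| ^ q) (y := |b| ^ q) (Set.mem_Ici.2 (by positivity))
    (Set.mem_Ici.2 (by positivity)) h1 h0 (by ring)
  simp only [smul_eq_mul] at this
  have e : ∀ z : ℝ, (|z| ^ q) ^ (2 / q) = z ^ 2 := by
    intro z
    rw [← Real.rpow_mul (abs_nonneg z), mul_div_cancel₀ _ hq0.ne', Real.rpow_two, sq_abs]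
  rw [e, e] at this
  have e2 : qmean q t a b ^ 2 = ((1 - t) * |a| ^ q + t * |b| ^ q) ^ (2 / q) := by
    unfold qmean
    rw [← Real.rpow_two, ← Real.rpow_mul (by positivity)]
    congr 1
    ring
  rw [e2]
  exact this

lemma qmean_diff_sq_le (q t a b c d : ℝ) (hq : 1 ≤ q) (hq2 : q ≤ 2)
    (ht : t ∈ Set.Icc (0 : ℝ) 1) :
    (qmean q t a b - qmean q t c d) ^ 2 ≤ (1 - t) * (a - c) ^ 2 + t * (b - d) ^ 2 := by
  refine le_trans ?_ (qmean_sq_le q t (a - c) (b - d) hq hq2 ht)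
  have h1 := qmean_sub_le q t a b c d hq ht
  have h2 := qmean_sub_le q t c d a b hq ht
  have e : qmean q t (c - a) (d - b) = qmean q t (a - c) (b - d) := by
    simp only [qmean, abs_sub_comm]
  rw [e] at h2
  have h3 := qmean_nonneg q t (a - c) (b - d) ht
  rw [sq_le_sq, abs_of_nonneg h3, abs_le]
  constructor <;> linarith

/-! ### The energy is bounded below -/

/-- Young's inequality with a small constant in front of the square. -/
lemma young_small (q β k : ℝ) (hq : 0 < q) (hq2 : q < 2) (hβ : 0 < β) (hk : 0 < k) :
    ∃ C : ℝ, 0 ≤ C ∧ ∀ r : ℝ, 0 ≤ r → β * r ^ q ≤ k * r ^ 2 + C := by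
  set T : ℝ := (β / k) ^ (1 / (2 - q)) with hT
  have hT0 : 0 < T := by positivity
  have hTe : T ^ (2 - q) = β / k := by
    rw [hT, ← Real.rpow_mul (by positivity), one_div_mul_cancel (by linarith), Real.rpow_one]
  refine ⟨β * T ^ q, by positivity, fun r hr => ?_⟩
  rcases le_total r T with h | h
  · have : r ^ q ≤ T ^ q := Real.rpow_le_rpow hr h hq.le
    nlinarith [mul_nonneg hk.le (sq_nonneg r)]
  · have hr0 : 0 < r := by linarith
    have h2 : T ^ (2 - q) ≤ r ^ (2 - q) := Real.rpow_le_rpow hT0.le h (by linarith)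
    rw [hTe, div_le_iff₀ hk] at h2
    have h3 : r ^ 2 = r ^ (2 - q) * r ^ q := by
      rw [← Real.rpow_add hr0, ← Real.rpow_two]
      ring_nf
    have h4 : 0 ≤ r ^ q := by positivity
    have h5 : 0 ≤ β * T ^ q := by positivity
    rw [h3]
    nlinarith [mul_le_mul_of_nonneg_right h2 h4]

/-- Poincaré inequality: the increments between `Ω` and a ball disjoint from it already
control the `L²` norm. -/
lemma poincare (N : ℕ) (hN : 1 ≤ N) (Ω : Set (E N)) (hΩo : IsOpen Ω)
    (hΩb : Bornology.IsBounded Ω) (s q : ℝ) (hs : 0 < s) :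
    ∃ κ : ℝ, 0 < κ ∧ ∀ u, memA N s q Ω u →
      ENNReal.ofReal κ * ∫⁻ x in Ω, ENNReal.ofReal (u x ^ 2) ≤ gagSq N s u := by
  obtain ⟨R, hR0, hR⟩ := hΩb.subset_ball_lt 0 0
  have : Nonempty (Fin N) := ⟨⟨0, hN⟩⟩
  obtain ⟨c, hc⟩ : ∃ c : E N, ‖c‖ = R + 1 := by
    have : Nontrivial (E N) := inferInstance
    exact exists_norm_eq (E N) (by linarith)
  set B := Metric.ball c 1 with hB
  set D : ℝ := 2 * R + 2 with hD
  have hD0 : 0 < D := by positivity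
  have hdisj : ∀ y ∈ B, y ∉ Ω := by
    intro y hy hyΩ
    have h1 := hR hyΩ
    rw [mem_ball_zero_iff] at h1
    rw [hB, Metric.mem_ball, dist_eq_norm] at hy
    have := norm_sub_norm_le c y
    rw [norm_sub_rev] at this
    linarith
  have hdist : ∀ x ∈ Ω, ∀ y ∈ B, dist x y ≤ D := by
    intro x hx y hy
    have h1 := hR hx
    rw [mem_ball_zero_iff] at h1
    rw [hB, Metric.mem_ball, dist_comm] at hy
    have h2 := dist_triangle x c y
    have h3 : dist x c ≤ ‖x‖ + ‖c‖ := by rw [dist_eq_norm]; exact norm_sub_le x c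
    linarith
  have hBfin : volume B ≠ ⊤ := measure_ball_lt_top.ne
  have hBpos : 0 < volume B := Metric.measure_ball_pos _ _ one_pos
  have he : 0 < (N : ℝ) + 2 * s := by positivity
  refine ⟨(volume B).toReal / D ^ ((N : ℝ) + 2 * s), ?_, ?_⟩
  · have := ENNReal.toReal_pos hBpos.ne' hBfin
    positivity
  intro u hu
  obtain ⟨hum, hu0, -, -⟩ := hu
  rw [← lintegral_const_mul _ (by fun_prop)]
  unfold gagSq
  refine le_trans ?_ (setLIntegral_le_lintegral Ω _)
  refine setLIntegral_mono' hΩo.measurableSet fun x hx => ?_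
  refine le_trans ?_ (setLIntegral_le_lintegral B _)
  have hstep : ∫⁻ y in B, ENNReal.ofReal (u x ^ 2 / D ^ ((N : ℝ) + 2 * s)) ≤
      ∫⁻ y in B, ENNReal.ofReal ((u x - u y) ^ 2 / dist x y ^ ((N : ℝ) + 2 * s)) := by
    refine lintegral_mono_ae ((ae_restrict_iff' Metric.isOpen_ball.measurableSet).2 ?_)
    filter_upwards [hu0] with y hy hyB
    rw [hy (hdisj y hyB), sub_zero]
    refine ENNReal.ofReal_le_ofReal ?_
    have hxy : 0 < dist x y := by
      rw [dist_pos]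
      rintro rfl
      exact hdisj x hyB hx
    have := hdist x hx y hyB
    gcongr
  refine le_trans (le_of_eq ?_) hstep
  rw [setLIntegral_const, div_eq_mul_inv, ENNReal.ofReal_mul (by positivity),
    ENNReal.ofReal_toReal hBfin, div_eq_mul_inv, ENNReal.ofReal_mul (by positivity)]
  ring

lemma EF_bddBelow (N : ℕ) (hN : 1 ≤ N) (Ω : Set (E N)) (hΩo : IsOpen Ω)
    (hΩb : Bornology.IsBounded Ω) (s q α : ℝ) (hs : 0 < s) (hq : 0 < q) (hq2 : q < 2)
    (hα : 0 < α) :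
    BddBelow {c : ℝ | ∃ u, memA N s q Ω u ∧ EF N s q α Ω u = c} := by
  obtain ⟨κ, hκ, hP⟩ := poincare N hN Ω hΩo hΩb s q hs
  obtain ⟨C, hC0, hC⟩ := young_small q (α / q) (κ / 2) hq hq2 (by positivity) (by positivity)
  have hvol : volume Ω ≠ ⊤ := hΩb.measure_lt_top.ne
  refine ⟨-(C * (volume Ω).toReal), ?_⟩
  rintro _ ⟨u, hu, rfl⟩
  have hp := hP u hu
  obtain ⟨hum, -, hfin, hint⟩ := hu
  have hlt : ∫⁻ x in Ω, ENNReal.ofReal (u x ^ 2) < ⊤ := by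
    by_contra h
    rw [not_lt, top_le_iff] at h
    rw [h, ENNReal.mul_top (by simpa using hκ)] at hp
    exact absurd hfin (not_lt.2 hp)
  have hsq : IntegrableOn (fun x => u x ^ 2) Ω := by
    refine ⟨by fun_prop, ?_⟩
    rw [hasFiniteIntegral_iff_ofReal (Eventually.of_forall fun x => sq_nonneg _)]
    exact hlt
  have h1 : κ * ∫ x in Ω, u x ^ 2 ≤ (gagSq N s u).toReal := by
    have := ENNReal.toReal_mono hfin.ne hp
    rwa [ENNReal.toReal_mul, ENNReal.toReal_ofReal hκ.le,
      ← integral_eq_lintegral_of_nonneg_ae (Eventually.of_forall fun x => sq_nonneg _)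
        (by fun_prop)] at this
  have hconst : IntegrableOn (fun _ : E N => C) Ω := integrableOn_const hvol
  have h2 : (α / q) * ∫ x in Ω, |u x| ^ q ≤
      (κ / 2) * (∫ x in Ω, u x ^ 2) + C * (volume Ω).toReal := by
    calc _ = ∫ x in Ω, (α / q) * |u x| ^ q := by rw [integral_const_mul]
      _ ≤ ∫ x in Ω, ((κ / 2) * u x ^ 2 + C) := by
        refine integral_mono (hint.const_mul _) ((hsq.const_mul _).add hconst) fun x => ?_
        have := hC |u x| (abs_nonneg _)
        rwa [sq_abs] at this
      _ = _ := by
        rw [integral_add (hsq.const_mul _) hconst, integral_const_mul, setIntegral_const,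
          smul_eq_mul, mul_comm C]
        rfl
  unfold EF
  linarith

/-! ### The path and its energy -/

/-- The path followed: first the `q`-power mean path from `|w|` to `v⁺` (for `t ≤ 1/2`), then
the segment from `v⁺` to `v⁺ - v⁻ = v`. The truncations glue the two pieces into one formula
that is pointwise continuous in `t`. -/
def gluedPath (N : ℕ) (q : ℝ) (w v : E N → ℝ) (t : ℝ) (x : E N) : ℝ :=
  qmean q (min (2 * t) 1) (w x) (max (v x) 0) - max (2 * t - 1) 0 * max (-(v x)) 0

lemma gluedPath_left (N : ℕ) (q : ℝ) (w v : E N → ℝ) (t : ℝ) (ht : t ≤ 1 / 2) :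
    gluedPath N q w v t = fun x => qmean q (2 * t) (w x) (max (v x) 0) := by
  funext x
  rw [gluedPath, min_eq_left (by linarith), max_eq_right (by linarith : 2 * t - 1 ≤ 0),
    zero_mul, sub_zero]

lemma gluedPath_right (N : ℕ) (q : ℝ) (hq : 0 < q) (w v : E N → ℝ) (t : ℝ) (ht : 1 / 2 ≤ t) :
    gluedPath N q w v t = fun x => max (v x) 0 - (2 * t - 1) * max (-(v x)) 0 := by
  funext x
  rw [gluedPath, min_eq_right (by linarith), max_eq_left (by linarith : 0 ≤ 2 * t - 1),
    qmean_one _ _ _ hq, abs_of_nonneg (le_max_right _ _)]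

lemma gluedPath_measurable (N : ℕ) (q : ℝ) (w v : E N → ℝ) (hw : Measurable w)
    (hv : Measurable v) (t : ℝ) : Measurable (gluedPath N q w v t) := by
  unfold gluedPath qmean
  fun_prop

lemma gluedPath_continuous (N : ℕ) (q : ℝ) (hq : 0 < q) (w v : E N → ℝ) (x : E N) :
    Continuous fun t => gluedPath N q w v t x := by
  unfold gluedPath
  have := (qmean_continuous q (w x) (max (v x) 0) hq).comp
    (by fun_prop : Continuous fun t : ℝ => min (2 * t) 1)
  exact this.sub (by fun_prop)

lemma max_sub_max_sq_le (a b : ℝ) : (max a 0 - max b 0) ^ 2 ≤ (a - b) ^ 2 :=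
  sq_le_sq.2 (abs_max_sub_max_le_abs a b 0)

/-- Bound on the increments of the path, uniform in `t`. -/
lemma gluedPath_diff_sq_le (N : ℕ) (q : ℝ) (hq : 1 ≤ q) (hq2 : q ≤ 2) (w v : E N → ℝ) (t : ℝ)
    (ht : t ∈ Set.Icc (0 : ℝ) 1) (x y : E N) :
    (gluedPath N q w v t x - gluedPath N q w v t y) ^ 2 ≤
      2 * (w x - w y) ^ 2 + 4 * (v x - v y) ^ 2 := by
  have hmin : min (2 * t) 1 ∈ Set.Icc (0 : ℝ) 1 :=
    ⟨le_min (by linarith [ht.1]) zero_le_one, min_le_right _ _⟩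
  have hmax : max (2 * t - 1) 0 ∈ Set.Icc (0 : ℝ) 1 :=
    ⟨le_max_right _ _, max_le (by linarith [ht.2]) zero_le_one⟩
  have h1 := qmean_diff_sq_le q (min (2 * t) 1) (w x) (max (v x) 0) (w y) (max (v y) 0) hq hq2
    hmin
  have h2 := max_sub_max_sq_le (v x) (v y)
  have h3 := max_sub_max_sq_le (-(v x)) (-(v y))
  unfold gluedPath
  generalize min (2 * t) 1 = τ at *
  generalize max (2 * t - 1) 0 = σ at *
  generalize qmean q τ (w x) (max (v x) 0) = a at *
  generalize qmean q τ (w y) (max (v y) 0) = b at *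
  generalize max (v x) 0 - max (v y) 0 = c at *
  have h4 : (a - b) ^ 2 ≤ (w x - w y) ^ 2 + (v x - v y) ^ 2 := by
    nlinarith [sq_nonneg (w x - w y), sq_nonneg c, hmin.1, hmin.2,
      mul_nonneg hmin.1 (sq_nonneg (w x - w y)),
      mul_nonneg (sub_nonneg.2 hmin.2) (sq_nonneg c)]
  set d := max (-(v x)) 0 - max (-(v y)) 0 with hd
  have h5 : (σ * d) ^ 2 ≤ (v x - v y) ^ 2 := by
    have : σ ^ 2 ≤ 1 := pow_le_one₀ hmax.1 hmax.2
    rw [mul_pow]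
    nlinarith [sq_nonneg d]
  have e : a - σ * max (-(v x)) 0 - (b - σ * max (-(v y)) 0) = (a - b) - σ * d := by
    rw [hd]; ring
  rw [e]
  nlinarith [sq_nonneg ((a - b) + σ * d)]

lemma abs_posneg_rpow (q τ z : ℝ) (hq : 0 < q) (hτ : 0 ≤ τ) :
    |max z 0 - τ * max (-z) 0| ^ q = |max z 0| ^ q + τ ^ q * |max (-z) 0| ^ q := by
  rcases le_total z 0 with h | h
  · rw [max_eq_right h, max_eq_left (by linarith : 0 ≤ -z), zero_sub, abs_neg, abs_mul,
      abs_of_nonneg hτ, Real.mul_rpow hτ (abs_nonneg _), abs_zero, Real.zero_rpow hq.ne', zero_add]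
  · rw [max_eq_left h, max_eq_right (by linarith : -z ≤ 0), mul_zero, sub_zero, abs_zero,
      Real.zero_rpow hq.ne', mul_zero, add_zero]

lemma memA_max (N : ℕ) (s q : ℝ) (hq : 0 < q) (Ω : Set (E N)) (v : E N → ℝ)
    (hv : memA N s q Ω v) : memA N s q Ω fun x => max (v x) 0 := by
  obtain ⟨hm, h0, hfin, hint⟩ := hv
  refine ⟨by fun_prop, ?_, ?_, ?_⟩
  · filter_upwards [h0] with x hx hxΩ
    rw [hx hxΩ, max_self]
  · refine lt_of_le_of_lt (gagSq_le N s _ v v v hm hm hm (by fun_prop) 1 0 0 zero_le_one le_rfl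
      le_rfl fun x y => ?_) ?_
    · linarith [max_sub_max_sq_le (v x) (v y)]
    · simpa using hfin
  · refine Integrable.mono' hint
      ((by fun_prop : Measurable fun x => |max (v x) 0| ^ q).aestronglyMeasurable) (Eventually.of_forall fun x => ?_)
    rw [Real.norm_of_nonneg (by positivity)]
    refine Real.rpow_le_rpow (abs_nonneg _) ?_ hq.le
    simpa using abs_max_sub_max_le_abs (v x) 0 0

lemma memA_neg (N : ℕ) (s q : ℝ) (Ω : Set (E N)) (v : E N → ℝ)
    (hv : memA N s q Ω v) : memA N s q Ω fun x => -(v x) := by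
  obtain ⟨hm, h0, hfin, hint⟩ := hv
  refine ⟨by fun_prop, ?_, ?_, ?_⟩
  · filter_upwards [h0] with x hx hxΩ
    rw [hx hxΩ, neg_zero]
  · refine lt_of_le_of_lt (gagSq_le N s _ v v v hm hm hm (by fun_prop) 1 0 0 zero_le_one le_rfl
      le_rfl fun x y => ?_) ?_
    · exact le_of_eq (by ring)
    · simpa using hfin
  · simpa only [abs_neg] using hint

lemma memA_congr (N : ℕ) (s q : ℝ) (Ω : Set (E N)) (u v : E N → ℝ) (h : u =ᵐ[volume] v)
    (hu : Measurable u) (hv : memA N s q Ω v) : memA N s q Ω u := by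
  obtain ⟨-, h0, hfin, hint⟩ := hv
  refine ⟨hu, ?_, by rwa [gagSq_congr N s u v h], ?_⟩
  · filter_upwards [h0, h] with x hx hxe hxΩ
    rw [hxe, hx hxΩ]
  · refine hint.congr (ae_restrict_of_ae ?_)
    filter_upwards [h] with x hx
    rw [hx]

lemma EF_congr (N : ℕ) (s q α : ℝ) (Ω : Set (E N)) (u v : E N → ℝ) (h : u =ᵐ[volume] v) :
    EF N s q α Ω u = EF N s q α Ω v := by
  unfold EF
  rw [gagSq_congr N s u v h]
  congr 2
  refine integral_congr_ae (ae_restrict_of_ae ?_)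
  filter_upwards [h] with x hx
  rw [hx]

lemma gluedPath_memA (N : ℕ) (s q : ℝ) (hq : 1 ≤ q) (hq2 : q ≤ 2) (Ω : Set (E N))
    (w v : E N → ℝ) (hw : memA N s q Ω w) (hv : memA N s q Ω v) (t : ℝ)
    (ht : t ∈ Set.Icc (0 : ℝ) 1) : memA N s q Ω (gluedPath N q w v t) := by
  have hq0 : 0 < q := by linarith
  have hP := memA_max N s q hq0 Ω v hv
  have hM := memA_max N s q hq0 Ω _ (memA_neg N s q Ω v hv)
  refine ⟨gluedPath_measurable N q w v hw.1 hv.1 t, ?_, ?_, ?_⟩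
  · filter_upwards [hw.2.1, hv.2.1] with x hx hx' hxΩ
    simp [gluedPath, qmean, hx hxΩ, hx' hxΩ, Real.zero_rpow hq0.ne', hq0.ne']
  · refine lt_of_le_of_lt (gagSq_le N s _ w v v hw.1 hv.1 hv.1
      (gluedPath_measurable N q w v hw.1 hv.1 t) 2 4 0 (by norm_num) (by norm_num) le_rfl
      fun x y => ?_) ?_
    · linarith [gluedPath_diff_sq_le N q hq hq2 w v t ht x y]
    · have h1 := hw.2.2.1
      have h2 := hv.2.2.1
      simp only [ENNReal.ofReal_zero, zero_mul, add_zero]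
      exact ENNReal.add_lt_top.2 ⟨ENNReal.mul_lt_top ENNReal.ofReal_lt_top h1,
        ENNReal.mul_lt_top ENNReal.ofReal_lt_top h2⟩
  · rcases le_total t (1 / 2) with h | h
    · rw [gluedPath_left N q w v t h]
      simp only [qmean_rpow q (2 * t) _ _ hq0 ⟨by linarith [ht.1], by linarith⟩]
      exact (hw.2.2.2.const_mul _).add (hP.2.2.2.const_mul _)
    · rw [gluedPath_right N q hq0 w v t h]
      simp only [abs_posneg_rpow q (2 * t - 1) _ hq0 (by linarith)]
      exact hP.2.2.2.add (hM.2.2.2.const_mul _)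

/-- Continuity of the path in the Gagliardo seminorm, by dominated convergence. -/
lemma gluedPath_tendsto (N : ℕ) (s q : ℝ) (hq : 1 ≤ q) (hq2 : q ≤ 2) (Ω : Set (E N))
    (w v : E N → ℝ) (hw : memA N s q Ω w) (hv : memA N s q Ω v) (t : ℝ)
    (ht : t ∈ Set.Icc (0 : ℝ) 1) :
    Tendsto (fun t' => gagSq N s fun x => gluedPath N q w v t' x - gluedPath N q w v t x)
      (nhdsWithin t (Set.Icc 0 1)) (nhds 0) := by
  have hq0 : 0 < q := by linarith
  have hmeas := gluedPath_measurable N q w v hw.1 hv.1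
  have hw1 := hw.1
  have hv1 := hv.1
  have hmd : ∀ t', Measurable fun x => gluedPath N q w v t' x - gluedPath N q w v t x :=
    fun t' => (hmeas t').sub (hmeas t)
  simp_rw [fun t' => gagSq_prod N s _ (hmd t')]
  have hmw := measurable_quot N s (fun p => (w p.1 - w p.2) ^ 2) (by fun_prop)
  have hmv := measurable_quot N s (fun p => (v p.1 - v p.2) ^ 2) (by fun_prop)
  have key := tendsto_lintegral_filter_of_dominated_convergence
    (μ := (volume : Measure (E N × E N))) (l := nhdsWithin t (Set.Icc 0 1))
    (F := fun t' p => ENNReal.ofReal (((gluedPath N q w v t' p.1 - gluedPath N q w v t p.1) -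
      (gluedPath N q w v t' p.2 - gluedPath N q w v t p.2)) ^ 2 /
        dist p.1 p.2 ^ ((N : ℝ) + 2 * s)))
    (f := fun _ => 0)
    (fun p => ENNReal.ofReal 8 *
        ENNReal.ofReal ((w p.1 - w p.2) ^ 2 / dist p.1 p.2 ^ ((N : ℝ) + 2 * s)) +
      ENNReal.ofReal 16 *
        ENNReal.ofReal ((v p.1 - v p.2) ^ 2 / dist p.1 p.2 ^ ((N : ℝ) + 2 * s)))
    (Eventually.of_forall fun t' => measurable_quot N s
      (fun p => ((gluedPath N q w v t' p.1 - gluedPath N q w v t p.1) -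
      (gluedPath N q w v t' p.2 - gluedPath N q w v t p.2)) ^ 2)
      ((((hmd t').comp measurable_fst).sub ((hmd t').comp measurable_snd)).pow_const 2))
    ?_ ?_ ?_
  · simpa using key
  · filter_upwards [self_mem_nhdsWithin] with t' ht'
    refine Eventually.of_forall fun p => ?_
    rw [← ENNReal.ofReal_mul (by norm_num), ← ENNReal.ofReal_mul (by norm_num),
      ← ENNReal.ofReal_add (by positivity) (by positivity)]
    refine ENNReal.ofReal_le_ofReal ?_
    have h1 := gluedPath_diff_sq_le N q hq hq2 w v t ht p.1 p.2
    have h2 := gluedPath_diff_sq_le N q hq hq2 w v t' ht' p.1 p.2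
    rw [← mul_div_assoc, ← mul_div_assoc, ← add_div]
    refine div_le_div_of_nonneg_right ?_ (by positivity)
    nlinarith [sq_nonneg ((gluedPath N q w v t' p.1 - gluedPath N q w v t' p.2) +
      (gluedPath N q w v t p.1 - gluedPath N q w v t p.2))]
  · rw [lintegral_add_left (hmw.const_mul _), lintegral_const_mul _ hmw,
      lintegral_const_mul _ hmv, ← gagSq_prod N s w hw1, ← gagSq_prod N s v hv1]
    exact (ENNReal.add_lt_top.2 ⟨ENNReal.mul_lt_top ENNReal.ofReal_lt_top hw.2.2.1,
        ENNReal.mul_lt_top ENNReal.ofReal_lt_top hv.2.2.1⟩).ne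
  · refine Eventually.of_forall fun p => ?_
    have c1 := gluedPath_continuous N q hq0 w v p.1
    have c2 := gluedPath_continuous N q hq0 w v p.2
    have hc : Continuous fun t' => ENNReal.ofReal
        (((gluedPath N q w v t' p.1 - gluedPath N q w v t p.1) -
        (gluedPath N q w v t' p.2 - gluedPath N q w v t p.2)) ^ 2 /
        dist p.1 p.2 ^ ((N : ℝ) + 2 * s)) := by
      refine ENNReal.continuous_ofReal.comp (Continuous.div_const ?_ _)
      exact ((c1.sub continuous_const).sub (c2.sub continuous_const)).pow 2
    have := (hc.tendsto t).mono_left (nhdsWithin_le_nhds (s := Set.Icc 0 1))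
    simpa using this

/-- Hidden convexity: `F` is convex along `q`-power mean paths. -/
lemma EF_qmean_le (N : ℕ) (s q α : ℝ) (hq : 1 ≤ q) (hq2 : q ≤ 2) (Ω : Set (E N))
    (w v : E N → ℝ) (hw : memA N s q Ω w) (hv : memA N s q Ω v) (τ : ℝ)
    (hτ : τ ∈ Set.Icc (0 : ℝ) 1) :
    EF N s q α Ω (fun x => qmean q τ (w x) (v x)) ≤
      (1 - τ) * EF N s q α Ω w + τ * EF N s q α Ω v := by
  have h0 := hτ.1
  have h1 : 0 ≤ 1 - τ := by linarith [hτ.2]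
  have hm : Measurable fun x => qmean q τ (w x) (v x) := by
    have := hw.1
    have := hv.1
    unfold qmean
    fun_prop
  have hg := gagSq_le N s _ w v v hw.1 hv.1 hv.1 hm (1 - τ) τ 0 h1 h0 le_rfl (fun x y => by
    linarith [qmean_diff_sq_le q τ (w x) (v x) (w y) (v y) hq hq2 hτ])
  simp only [ENNReal.ofReal_zero, zero_mul, add_zero] at hg
  have hf1 := ENNReal.mul_lt_top (ENNReal.ofReal_lt_top (r := 1 - τ)) hw.2.2.1
  have hf2 := ENNReal.mul_lt_top (ENNReal.ofReal_lt_top (r := τ)) hv.2.2.1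
  have hg' := ENNReal.toReal_mono (ENNReal.add_lt_top.2 ⟨hf1, hf2⟩).ne hg
  rw [ENNReal.toReal_add hf1.ne hf2.ne, ENNReal.toReal_mul, ENNReal.toReal_mul,
    ENNReal.toReal_ofReal h1, ENNReal.toReal_ofReal h0] at hg'
  unfold EF
  simp only [qmean_rpow q τ _ _ (by linarith : 0 < q) hτ]
  rw [integral_add (hw.2.2.2.const_mul _) (hv.2.2.2.const_mul _), integral_const_mul,
    integral_const_mul]
  nlinarith [hg']

lemma crossI_lt_top (N : ℕ) (s : ℝ) (v : E N → ℝ)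
    (hfin : gagSq N s v < ⊤) :
    crossI N s (fun x => max (v x) 0) (fun x => max (-(v x)) 0) < ⊤ := by
  refine lt_of_le_of_lt ?_ hfin
  unfold crossI gagSq
  refine lintegral_mono fun x => lintegral_mono fun y => ENNReal.ofReal_le_ofReal ?_
  refine div_le_div_of_nonneg_right ?_ (by positivity)
  beta_reduce
  rcases le_total (v x) 0 with h | h
  · rw [max_eq_right h, zero_mul]
    positivity
  · rcases le_total (v y) 0 with h' | h'
    · rw [max_eq_left h, max_eq_left (by linarith)]
      nlinarith [mul_nonneg h (neg_nonneg.2 h')]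
    · rw [max_eq_right (by linarith : -(v y) ≤ 0), mul_zero]
      positivity

/-- Energy of `v⁺ - τ v⁻`. -/
lemma EF_sub (N : ℕ) (s q α : ℝ) (hq : 0 < q) (Ω : Set (E N)) (v : E N → ℝ)
    (hv : memA N s q Ω v) (τ : ℝ) (hτ : 0 ≤ τ) :
    EF N s q α Ω (fun x => max (v x) 0 - τ * max (-(v x)) 0) =
      EF N s q α Ω (fun x => max (v x) 0) +
      2 * τ * (crossI N s (fun x => max (v x) 0) (fun x => max (-(v x)) 0)).toReal +
      (τ ^ 2 * ((1 / 2) * (gagSq N s (fun x => max (-(v x)) 0)).toReal) -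
        τ ^ q * ((α / q) * ∫ x in Ω, |max (-(v x)) 0| ^ q)) := by
  have hP := memA_max N s q hq Ω v hv
  have hM := memA_max N s q hq Ω _ (memA_neg N s q Ω v hv)
  have hI := crossI_lt_top N s v hv.2.2.1
  have hPM : ∀ x, max (v x) 0 * max (-(v x)) 0 = 0 := by
    intro x
    rcases le_total (v x) 0 with h | h
    · rw [max_eq_right h, zero_mul]
    · rw [max_eq_right (by linarith : -(v x) ≤ 0), mul_zero]
  have hg := gagSq_sub N s _ _ hP.1 hM.1 (fun x => le_max_right _ _) (fun x => le_max_right _ _)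
    hPM τ hτ
  have f2 := ENNReal.mul_lt_top (ENNReal.ofReal_lt_top (r := τ ^ 2)) hM.2.2.1
  have f3 := ENNReal.mul_lt_top (ENNReal.ofReal_lt_top (r := 4 * τ)) hI
  unfold EF
  rw [hg, ENNReal.toReal_add (ENNReal.add_lt_top.2 ⟨hP.2.2.1, f2⟩).ne f3.ne,
    ENNReal.toReal_add hP.2.2.1.ne f2.ne, ENNReal.toReal_mul, ENNReal.toReal_mul,
    ENNReal.toReal_ofReal (by positivity), ENNReal.toReal_ofReal (by positivity)]
  simp only [abs_posneg_rpow q τ _ hq hτ]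
  rw [integral_add hP.2.2.2 (hM.2.2.2.const_mul _), integral_const_mul]
  ring

lemma posPart_sub_negPart_fun (N : ℕ) (v : E N → ℝ) :
    (fun x => max (v x) 0 - 1 * max (-(v x)) 0) = v := by
  funext x
  rcases le_total (v x) 0 with h | h
  · rw [max_eq_right h, max_eq_left (by linarith)]; ring
  · rw [max_eq_left h, max_eq_right (by linarith)]; ring

/-- Either sign alternative keeps the segment from `v⁺` to `v` below the level `L`: with
`A = [v⁻]²/2` and `B = (α/q)∫|v⁻|^q`, the function `τ²A - τ^q B` on `[0,1]` is at most
`A - B` if `A > B`, and is nonpositive if `A ≤ B`. -/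
lemma EF_segment_lt (N : ℕ) (s q α : ℝ) (hq : 0 < q) (hq2 : q ≤ 2)
    (Ω : Set (E N)) (v : E N → ℝ) (hv : memA N s q Ω v) (L : ℝ)
    (hcase : (0 < EF N s q α Ω (fun x => max (-(v x)) 0) ∧ EF N s q α Ω v < L) ∨
      (EF N s q α Ω (fun x => max (-(v x)) 0) ≤ 0 ∧
        EF N s q α Ω (fun x => max (v x) 0) +
          2 * (crossI N s (fun x => max (v x) 0) (fun x => max (-(v x)) 0)).toReal < L))
    (τ : ℝ) (hτ : τ ∈ Set.Icc (0 : ℝ) 1) :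
    EF N s q α Ω (fun x => max (v x) 0 - τ * max (-(v x)) 0) < L := by
  have h0 := hτ.1
  have h1 := hτ.2
  have e1 := EF_sub N s q α hq Ω v hv 1 zero_le_one
  rw [posPart_sub_negPart_fun, Real.one_rpow] at e1
  rw [EF_sub N s q α hq Ω v hv τ h0]
  have eM : EF N s q α Ω (fun x => max (-(v x)) 0) =
    (1 / 2) * (gagSq N s (fun x => max (-(v x)) 0)).toReal -
      (α / q) * ∫ x in Ω, |max (-(v x)) 0| ^ q := rfl
  rw [eM] at hcase
  have hA : 0 ≤ (1 / 2) * (gagSq N s (fun x => max (-(v x)) 0)).toReal := by positivity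
  have hI : 0 ≤ (crossI N s (fun x => max (v x) 0) (fun x => max (-(v x)) 0)).toReal :=
    ENNReal.toReal_nonneg
  have hp : τ ^ 2 ≤ τ ^ q := by
    rcases h0.eq_or_lt with h | h
    · rw [← h, Real.zero_rpow hq.ne']; norm_num
    · rw [← Real.rpow_two]
      exact Real.rpow_le_rpow_of_exponent_ge h h1 hq2
  have hp1 : τ ^ q ≤ 1 := Real.rpow_le_one h0 h1 hq.le
  have hp0 : 0 ≤ τ ^ q := Real.rpow_nonneg h0 q
  generalize (1 / 2) * (gagSq N s (fun x => max (-(v x)) 0)).toReal = A at *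
  generalize (α / q) * ∫ x in Ω, |max (-(v x)) 0| ^ q = B at *
  generalize (crossI N s (fun x => max (v x) 0) (fun x => max (-(v x)) 0)).toReal = I at *
  generalize EF N s q α Ω (fun x => max (v x) 0) = a at *
  have k1 : τ ^ 2 * A ≤ τ ^ q * A := mul_le_mul_of_nonneg_right hp hA
  have k2 : τ * I ≤ I := mul_le_of_le_one_left hI h1
  rcases hcase with ⟨ha, hb⟩ | ⟨ha, hb⟩
  · nlinarith [mul_nonneg (sub_nonneg.2 hp1) ha.le]
  · nlinarith [mul_nonneg hp0 (neg_nonneg.2 ha)]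

lemma gluedPath_EF_lt (N : ℕ) (s q α : ℝ) (hq : 1 ≤ q) (hq2 : q ≤ 2)
    (Ω : Set (E N)) (w v : E N → ℝ) (hw : memA N s q Ω w) (hv : memA N s q Ω v)
    (hmin : ∀ u, memA N s q Ω u → EF N s q α Ω w ≤ EF N s q α Ω u) (L : ℝ)
    (hcase : (0 < EF N s q α Ω (fun x => max (-(v x)) 0) ∧ EF N s q α Ω v < L) ∨
      (EF N s q α Ω (fun x => max (-(v x)) 0) ≤ 0 ∧
        EF N s q α Ω (fun x => max (v x) 0) +
          2 * (crossI N s (fun x => max (v x) 0) (fun x => max (-(v x)) 0)).toReal < L))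
    (t : ℝ) (ht : t ∈ Set.Icc (0 : ℝ) 1) :
    EF N s q α Ω (gluedPath N q w v t) < L := by
  have hq0 : 0 < q := by linarith
  have hseg := EF_segment_lt N s q α hq0 hq2 Ω v hv L hcase
  rcases le_total t (1 / 2) with h | h
  · have hP := memA_max N s q hq0 Ω v hv
    have hPL := hseg 0 ⟨le_rfl, zero_le_one⟩
    simp only [zero_mul, sub_zero] at hPL
    have hτ : 2 * t ∈ Set.Icc (0 : ℝ) 1 := ⟨by linarith [ht.1], by linarith⟩
    rw [gluedPath_left N q w v t h]
    have h1 := EF_qmean_le N s q α hq hq2 Ω w _ hw hP (2 * t) hτ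
    have h2 := hmin _ hP
    nlinarith [mul_le_mul_of_nonneg_left h2 (sub_nonneg.2 hτ.2)]
  · rw [gluedPath_right N q hq0 w v t h]
    exact hseg _ ⟨by linarith, by linarith [ht.2]⟩

/-- Paths of controlled energy joining the positive minimizer to `Φ(u₀)`. -/
theorem controlled_energy_path (N : ℕ) (hN : 1 ≤ N) (Ω : Set (E N)) (hΩo : IsOpen Ω)
    (hΩb : Bornology.IsBounded Ω) (hΩn : Ω.Nonempty)
    (s m α : ℝ) (hs : s ∈ Set.Ioo (0:ℝ) 1) (hm : 1 < m) (hα : 0 < α)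
    (u₀ : E N → ℝ) (hu₀m : Measurable u₀)
    (hu₀L : IntegrableOn (fun x => |u₀ x| ^ (m + 1)) Ω)
    (hΦu₀ : memA N s ((m + 1) / m) Ω fun x => Phi m (u₀ x))
    (w : E N → ℝ) (hwA : memA N s ((m + 1) / m) Ω w)
    (hwpos : ∀ᵐ x : E N, x ∈ Ω → 0 < w x)
    (hwmin : EF N s ((m + 1) / m) α Ω w = Lam1 N s ((m + 1) / m) α Ω)
    (hcase :
      (0 < EF N s ((m + 1) / m) α Ω (fun x => max (-(Phi m (u₀ x))) 0) ∧
        EF N s ((m + 1) / m) α Ω (fun x => Phi m (u₀ x)) <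
          Lam2 N s ((m + 1) / m) α Ω) ∨
      (EF N s ((m + 1) / m) α Ω (fun x => max (-(Phi m (u₀ x))) 0) ≤ 0 ∧
        EF N s ((m + 1) / m) α Ω (fun x => max (Phi m (u₀ x)) 0) +
            2 * (crossI N s (fun x => max (Phi m (u₀ x)) 0)
              (fun x => max (-(Phi m (u₀ x))) 0)).toReal <
          Lam2 N s ((m + 1) / m) α Ω)) :
    ∃ θ : ℝ → E N → ℝ,
      (∀ t ∈ Set.Icc (0:ℝ) 1, memA N s ((m + 1) / m) Ω (θ t)) ∧
      (∀ t ∈ Set.Icc (0:ℝ) 1, ∀ ε > (0:ℝ), ∃ δ > (0:ℝ), ∀ t' ∈ Set.Icc (0:ℝ) 1,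
        |t' - t| < δ →
          gagSq N s (fun x => θ t' x - θ t x) < ENNReal.ofReal (ε ^ 2)) ∧
      θ 0 = w ∧ θ 1 = (fun x => Phi m (u₀ x)) ∧
      ∀ t ∈ Set.Icc (0:ℝ) 1,
        EF N s ((m + 1) / m) α Ω (θ t) < Lam2 N s ((m + 1) / m) α Ω := by
  set q : ℝ := (m + 1) / m with hqdef
  have hm0 : 0 < m := by linarith
  have hq : 1 < q := by rw [hqdef, lt_div_iff₀ hm0]; linarith
  have hq2 : q < 2 := by rw [hqdef, div_lt_iff₀ hm0]; linarith
  have hq0 : 0 < q := by linarith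
  set v : E N → ℝ := fun x => Phi m (u₀ x) with hv
  -- The path starts at `|w|`, which is only a.e. equal to `w`; its initial value is replaced.
  have hw_abs : ∀ᵐ x : E N, w x = |w x| := by
    filter_upwards [hwpos, hwA.2.1] with x h1 h2
    by_cases hx : x ∈ Ω
    · rw [abs_of_pos (h1 hx)]
    · rw [h2 hx, abs_zero]
  have hae : ∀ t, Function.update (gluedPath N q w v) 0 w t =ᵐ[volume] gluedPath N q w v t := by
    intro t
    by_cases h : t = 0
    · subst h
      rw [Function.update_self, gluedPath_left N q w v 0 (by norm_num)]
      filter_upwards [hw_abs] with x hx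
      rw [mul_zero, qmean_zero q _ _ hq0]
      exact hx
    · rw [Function.update_of_ne h]
  have hmeas : ∀ t, Measurable (Function.update (gluedPath N q w v) 0 w t) := by
    intro t
    by_cases h : t = 0
    · subst h
      rw [Function.update_self]
      exact hwA.1
    · rw [Function.update_of_ne h]
      exact gluedPath_measurable N q w v hwA.1 hΦu₀.1 t
  have hmin : ∀ u, memA N s q Ω u → EF N s q α Ω w ≤ EF N s q α Ω u := by
    intro u hu
    rw [hwmin]
    exact csInf_le (EF_bddBelow N hN Ω hΩo hΩb s q α hs.1 hq0 hq2 hα) ⟨u, hu, rfl⟩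
  refine ⟨Function.update (gluedPath N q w v) 0 w, fun t ht => ?_, fun t ht ε hε => ?_,
    Function.update_self _ _ _, ?_, fun t ht => ?_⟩
  · exact memA_congr N s q Ω _ _ (hae t) (hmeas t)
      (gluedPath_memA N s q hq.le hq2.le Ω w v hwA hΦu₀ t ht)
  · have hev := (gluedPath_tendsto N s q hq.le hq2.le Ω w v hwA hΦu₀ t ht).eventually
      (gt_mem_nhds (by simpa using pow_pos hε 2 : (0 : ℝ≥0∞) < ENNReal.ofReal (ε ^ 2)))
    rw [eventually_nhdsWithin_iff, Metric.eventually_nhds_iff] at hev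
    obtain ⟨δ, hδ, H⟩ := hev
    refine ⟨δ, hδ, fun t' ht' hd => ?_⟩
    have := H (by rwa [Real.dist_eq]) ht'
    refine lt_of_eq_of_lt (gagSq_congr N s _ _ ?_) this
    exact (hae t').sub (hae t)
  · rw [Function.update_of_ne one_ne_zero, gluedPath_right N q hq0 w v 1 (by norm_num)]
    norm_num only
    exact posPart_sub_negPart_fun N v
  · rw [EF_congr N s q α Ω _ _ (hae t)]
    exact gluedPath_EF_lt N s q α hq.le hq2.le Ω w v hwA hΦu₀ hmin _ hcase t ht
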